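/- arXiv:2502.12394 — 2 statements merged into one kernel-verified Lean document; each statement's English description precedes it below -/
import Mathlib

section
/- The following identity holds as formal power series in the variables x, y, z, q over ℤ: (1 − 2yq + (y² − x²)q² + (1−z)x²y q³) · ∑_{α,λ,n ≥ 1} ∑_{j ≥ 0} FO_{j,2}(α,λ,n) x^α y^λ z^j qⁿ = x y q (1 − (y − xz) q). -/
open Multiset Finset Filter

/-- A partition is encoded as a nonempty multiset of positive integers (its parts). -/
def IsPartition (M : Multiset ℕ) : Prop := M ≠ 0 ∧ ∀ x ∈ M, 0 < x

/-- The perimeter of a partition: (largest part) + (number of parts) - 1. -/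
def perim (M : Multiset ℕ) : ℕ := M.sup + Multiset.card M - 1

/-- `rP n P` counts the partitions (of any sum) with perimeter `n` satisfying `P`. -/
noncomputable def rP (n : ℕ) (P : Multiset ℕ → Prop) : ℕ :=
  Set.ncard {M : Multiset ℕ | IsPartition M ∧ perim M = n ∧ P M}

/-- `FOt j α lam n`: partitions with perimeter n, largest part α, lam parts, and exactly j
distinct even part values. -/
noncomputable def FOt (j α lam n : ℕ) : ℕ :=
  Set.ncard {M : Multiset ℕ | IsPartition M ∧ M.sup = α ∧ Multiset.card M = lam ∧
    perim M = n ∧ (M.toFinset.filter (fun v => Even v)).card = j}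

/-- The generating series ∑ FOt(j,α,λ,n) x^α y^λ z^j q^n, with variables
x = X 0, y = X 1, z = X 2, q = X 3. -/
noncomputable def FOseries : MvPowerSeries (Fin 4) ℤ :=
  fun e => if 1 ≤ e 0 ∧ 1 ≤ e 1 ∧ 1 ≤ e 3 then (FOt (e 2) (e 0) (e 1) (e 3) : ℤ) else 0

/-!
Compare the largest part of a partition with the next one, repetitions counted. An even largest part
is either repeated, or can be lowered by one to an odd largest part. An odd largest part is
repeated, or is the only part of `{1}`, or exceeds the next part by exactly one, or can be lowered
by two. So the generating series `P` and `Q` of the partitions with odd, respectively even, largest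
part satisfy

  `P = y q P + x y q + x y q² Q + x² q² P`  and  `Q = y q Q + x z q P`,

and the theorem is the solution `P + Q` of this linear system.
-/

section GeneratingSeries

open MvPowerSeries

variable {ι κ σ : Type*} (R : Type*) [Semiring R]

/-- The generating series of a class `S` of objects, where `i ∈ S` contributes the monomial with
exponent `w i`. This is meaningful only if each exponent is attained finitely often, since the
`ncard` of an infinite set is `0`. -/
noncomputable def generatingSeries (w : ι → σ →₀ ℕ) (S : Set ι) : MvPowerSeries σ R :=
  fun e => ((S ∩ w ⁻¹' {e}).ncard : R)

variable {R}

lemma coeff_generatingSeries (w : ι → σ →₀ ℕ) (S : Set ι) (e : σ →₀ ℕ) :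
    coeff e (generatingSeries R w S) = ((S ∩ w ⁻¹' {e}).ncard : R) :=
  rfl

lemma generatingSeries_singleton (w : ι → σ →₀ ℕ) (i : ι) :
    generatingSeries R w {i} = monomial (w i) 1 := by
  classical
  ext e
  rw [coeff_generatingSeries, coeff_monomial]
  split_ifs with h
  · have hi : i ∈ w ⁻¹' {e} := h.symm
    rw [Set.inter_eq_left.2 (Set.singleton_subset_iff.2 hi), Set.ncard_singleton, Nat.cast_one]
  · have hi : i ∉ w ⁻¹' {e} := Ne.symm h
    rw [Set.singleton_inter_eq_empty.2 hi, Set.ncard_empty, Nat.cast_zero]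

lemma generatingSeries_union {w : ι → σ →₀ ℕ} (hw : ∀ e, (w ⁻¹' {e}).Finite) {S T : Set ι}
    (hST : Disjoint S T) :
    generatingSeries R w (S ∪ T) = generatingSeries R w S + generatingSeries R w T := by
  ext e
  rw [_root_.map_add, coeff_generatingSeries, coeff_generatingSeries, coeff_generatingSeries,
    Set.union_inter_distrib_right, Set.ncard_union_eq (hST.mono Set.inter_subset_left
      Set.inter_subset_left) ((hw e).inter_of_right S) ((hw e).inter_of_right T), Nat.cast_add]

lemma generatingSeries_image {v : κ → σ →₀ ℕ} {w : ι → σ →₀ ℕ} {f : ι → κ} {S : Set ι}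
    {d : σ →₀ ℕ} (hf : S.InjOn f) (hd : ∀ i ∈ S, v (f i) = w i + d) :
    generatingSeries R v (f '' S) = monomial d 1 * generatingSeries R w S := by
  classical
  ext e
  rw [coeff_monomial_mul, coeff_generatingSeries, one_mul, ← Set.image_inter_preimage,
    (hf.mono Set.inter_subset_left).ncard_image]
  split_ifs with hde
  · rw [coeff_generatingSeries]
    congr 2
    ext i
    refine and_congr_right fun hi => ?_
    rw [Set.mem_preimage, Set.mem_preimage, Set.mem_preimage, Set.mem_singleton_iff, hd i hi,
      Set.mem_singleton_iff, eq_tsub_iff_add_eq_of_le hde]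
  · have fiber_eq_empty : S ∩ f ⁻¹' (v ⁻¹' {e}) = ∅ := by
      rw [Set.eq_empty_iff_forall_notMem]
      rintro i ⟨hi, rfl⟩
      exact hde (hd i hi ▸ le_add_self)
    rw [fiber_eq_empty, Set.ncard_empty, Nat.cast_zero]

end GeneratingSeries

section Multiset

lemma finite_setOf_card_eq_of_forall_mem {α : Type*} (s : Finset α) (l : ℕ) :
    {M : Multiset α | Multiset.card M = l ∧ ∀ x ∈ M, x ∈ s}.Finite := by
  classical
  exact ((s.sym l).finite_toSet.image Subtype.val).subset fun M ⟨hl, hs⟩ =>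
    ⟨⟨M, hl⟩, Finset.mem_sym_iff.2 hs, rfl⟩

lemma multiset_sup_mem {α : Type*} [LinearOrder α] [OrderBot α] {M : Multiset α} (hM : M ≠ 0) :
    M.sup ∈ M := by
  induction M using Multiset.induction with
  | empty => exact absurd rfl hM
  | cons a N ih =>
    rcases eq_or_ne N 0 with rfl | hN
    · simp
    rw [Multiset.sup_cons]
    rcases le_total N.sup a with h | h
    · rw [sup_eq_left.2 h]
      exact Multiset.mem_cons_self a N
    · rw [sup_eq_right.2 h]
      exact Multiset.mem_cons_of_mem (ih hN)

lemma sup_cons_erase_sup {α : Type*} [LinearOrder α] [OrderBot α] {M : Multiset α}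
    (hM : M ≠ 0) : M.sup ::ₘ M.erase M.sup = M :=
  Multiset.cons_erase (multiset_sup_mem hM)

end Multiset

/-- The second largest element, repetitions counted, or `0` if there is none: it equals the largest
element exactly when that one is repeated. -/
def secondPart (M : Multiset ℕ) : ℕ := (M.erase M.sup).sup

/-- Adds to a partition a new largest part, exceeding the old one by `k`. -/
def consMax (k : ℕ) (M : Multiset ℕ) : Multiset ℕ := (M.sup + k) ::ₘ M

/-- Raises one copy of the largest part of a partition by `k`. -/
def raiseMax (k : ℕ) (M : Multiset ℕ) : Multiset ℕ := (M.sup + k) ::ₘ M.erase M.sup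

/-- The partitions whose largest part satisfies `p`. -/
def partitionsWithMax (p : ℕ → Prop) : Set (Multiset ℕ) := {M | IsPartition M ∧ p M.sup}

section LargestPart

variable {a k : ℕ} {p : ℕ → Prop} {M N : Multiset ℕ}

lemma sup_cons_of_sup_le (h : N.sup ≤ a) : (a ::ₘ N).sup = a := by
  rw [Multiset.sup_cons, sup_eq_left.2 h]

lemma secondPart_cons (h : N.sup ≤ a) : secondPart (a ::ₘ N) = N.sup := by
  rw [secondPart, sup_cons_of_sup_le h, Multiset.erase_cons_head]

lemma secondPart_le_sup (M : Multiset ℕ) : secondPart M ≤ M.sup :=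
  Multiset.sup_mono (Multiset.erase_subset _ _)

lemma sup_consMax (k : ℕ) (M : Multiset ℕ) : (consMax k M).sup = M.sup + k :=
  sup_cons_of_sup_le (Nat.le_add_right _ _)

lemma secondPart_consMax (k : ℕ) (M : Multiset ℕ) : secondPart (consMax k M) = M.sup :=
  secondPart_cons (Nat.le_add_right _ _)

lemma sup_raiseMax (k : ℕ) (M : Multiset ℕ) : (raiseMax k M).sup = M.sup + k :=
  sup_cons_of_sup_le ((secondPart_le_sup M).trans (Nat.le_add_right _ _))

lemma secondPart_raiseMax (k : ℕ) (M : Multiset ℕ) :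
    secondPart (raiseMax k M) = secondPart M :=
  secondPart_cons ((secondPart_le_sup M).trans (Nat.le_add_right _ _))

lemma raiseMax_cons (h : N.sup ≤ a) : raiseMax k (a ::ₘ N) = (a + k) ::ₘ N := by
  rw [raiseMax, sup_cons_of_sup_le h, Multiset.erase_cons_head]

lemma consMax_injective (k : ℕ) : Function.Injective (consMax k) := by
  intro M N h
  have sup_eq : M.sup = N.sup := by rw [← secondPart_consMax k M, h, secondPart_consMax]
  rwa [consMax, consMax, sup_eq, Multiset.cons_inj_right] at h

lemma raiseMax_injOn (k : ℕ) : {M | M ≠ 0}.InjOn (raiseMax k) := by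
  intro M hM N hN h
  have sup_eq : M.sup = N.sup := by
    apply Nat.add_right_cancel (m := k)
    rw [← sup_raiseMax, h, sup_raiseMax]
  rw [raiseMax, raiseMax, sup_eq, Multiset.cons_inj_right] at h
  rw [← sup_cons_erase_sup hM, ← sup_cons_erase_sup hN, sup_eq, h]

lemma isPartition_cons (ha : 0 < a) (hN : ∀ x ∈ N, 0 < x) : IsPartition (a ::ₘ N) :=
  ⟨Multiset.cons_ne_zero, Multiset.forall_mem_cons.2 ⟨ha, hN⟩⟩

lemma IsPartition.sup_pos (hM : IsPartition M) : 0 < M.sup :=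
  hM.2 _ (multiset_sup_mem hM.1)

lemma IsPartition.pos_of_mem_erase (hM : IsPartition M) : ∀ x ∈ M.erase a, 0 < x :=
  fun x hx => hM.2 x (Multiset.mem_of_mem_erase hx)

lemma IsPartition.eq_singleton_iff (hM : IsPartition M) :
    M = {a} ↔ M.sup = a ∧ secondPart M = 0 := by
  constructor
  · rintro rfl
    simp [secondPart]
  · rintro ⟨rfl, h⟩
    have erase_eq_zero : M.erase M.sup = 0 := by
      by_contra hne
      exact (hM.pos_of_mem_erase _ (multiset_sup_mem hne)).ne' h
    conv_lhs => rw [← sup_cons_erase_sup hM.1, erase_eq_zero, Multiset.cons_zero]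

lemma isPartition_singleton_one : IsPartition {1} :=
  isPartition_cons Nat.one_pos fun _ hx => absurd hx (Multiset.notMem_zero _)

lemma mem_image_consMax_iff : M ∈ consMax k '' partitionsWithMax p ↔
    IsPartition M ∧ 0 < secondPart M ∧ p (secondPart M) ∧ secondPart M + k = M.sup := by
  constructor
  · rintro ⟨N, ⟨hN, hp⟩, rfl⟩
    rw [secondPart_consMax, sup_consMax]
    exact ⟨isPartition_cons (Nat.add_pos_left hN.sup_pos k) hN.2, hN.sup_pos, hp, rfl⟩
  · rintro ⟨hM, hpos, hp, hk⟩
    have erase_ne_zero : M.erase M.sup ≠ 0 := fun h => by simp [secondPart, h] at hpos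
    refine ⟨M.erase M.sup, ⟨⟨erase_ne_zero, hM.pos_of_mem_erase⟩, hp⟩, ?_⟩
    change (secondPart M + k) ::ₘ _ = M
    rw [hk, sup_cons_erase_sup hM.1]

lemma mem_image_raiseMax_iff : M ∈ raiseMax k '' partitionsWithMax p ↔
    IsPartition M ∧ secondPart M + k ≤ M.sup ∧ k < M.sup ∧ p (M.sup - k) := by
  constructor
  · rintro ⟨N, ⟨hN, hp⟩, rfl⟩
    rw [secondPart_raiseMax, sup_raiseMax, Nat.add_sub_cancel]
    exact ⟨isPartition_cons (Nat.add_pos_left hN.sup_pos k) hN.pos_of_mem_erase,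
      Nat.add_le_add_right (secondPart_le_sup N) k, Nat.lt_add_of_pos_left hN.sup_pos, hp⟩
  · rintro ⟨hM, hgap, hk, hp⟩
    have sup_erase_le : (M.erase M.sup).sup ≤ M.sup - k := Nat.le_sub_of_add_le hgap
    refine ⟨(M.sup - k) ::ₘ M.erase M.sup,
      ⟨isPartition_cons (Nat.sub_pos_of_lt hk) hM.pos_of_mem_erase, ?_⟩, ?_⟩
    · rwa [sup_cons_of_sup_le sup_erase_le]
    · rw [raiseMax_cons sup_erase_le, Nat.sub_add_cancel hk.le, sup_cons_erase_sup hM.1]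

lemma partitionsWithMax_even_eq : partitionsWithMax Even =
    consMax 0 '' partitionsWithMax Even ∪ raiseMax 1 '' partitionsWithMax Odd := by
  ext M
  rw [Set.mem_union, mem_image_consMax_iff, mem_image_raiseMax_iff]
  have sup_pos := @IsPartition.sup_pos M
  have second_le_sup := secondPart_le_sup M
  grind [partitionsWithMax]

lemma partitionsWithMax_odd_eq : partitionsWithMax Odd =
    consMax 0 '' partitionsWithMax Odd ∪
      ({{1}} ∪ (consMax 1 '' partitionsWithMax Even ∪ raiseMax 2 '' partitionsWithMax Odd)) := by
  ext M
  rw [Set.mem_union, Set.mem_union, Set.mem_union, mem_image_consMax_iff, mem_image_consMax_iff,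
    mem_image_raiseMax_iff]
  -- The four sets are told apart by `M.sup - secondPart M`, which is `0`, `1` (twice, with
  -- `secondPart M` zero or positive) or at least `2`; the rest is parity.
  have sup_pos := @IsPartition.sup_pos M
  have second_le_sup := secondPart_le_sup M
  have isPartition_one := isPartition_singleton_one
  have eq_one_iff := @IsPartition.eq_singleton_iff 1 M
  grind [partitionsWithMax]

end LargestPart

section Statistics

variable {k : ℕ} {M : Multiset ℕ}

/-- The number of distinct even part values, the statistic marked by `z`. -/
def numEvenValues (M : Multiset ℕ) : ℕ := (M.toFinset.filter (fun v => Even v)).card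

lemma numEvenValues_cons (a : ℕ) (N : Multiset ℕ) :
    numEvenValues (a ::ₘ N) = numEvenValues N + if Even a ∧ a ∉ N then 1 else 0 := by
  rw [numEvenValues, numEvenValues, Multiset.toFinset_cons, Finset.filter_insert]
  by_cases ha : Even a <;> by_cases haN : a ∈ N <;> simp [ha, haN]

/-- The exponent vector of the monomial `x ^ a * y ^ l * z ^ j * q ^ n`. -/
noncomputable def exponentVec (a l j n : ℕ) : Fin 4 →₀ ℕ :=
  Finsupp.equivFunOnFinite.symm ![a, l, j, n]

lemma exponentVec_add (a l j n a' l' j' n' : ℕ) :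
    exponentVec a l j n + exponentVec a' l' j' n' =
      exponentVec (a + a') (l + l') (j + j') (n + n') := by
  ext i
  fin_cases i <;> rfl

lemma exponentVec_eq_iff {a l j n : ℕ} {e : Fin 4 →₀ ℕ} :
    exponentVec a l j n = e ↔ a = e 0 ∧ l = e 1 ∧ j = e 2 ∧ n = e 3 := by
  simp [DFunLike.ext_iff, Fin.forall_fin_succ, exponentVec]

open MvPowerSeries in
lemma monomial_exponentVec {R : Type*} [CommSemiring R] (a l j n : ℕ) :
    monomial (exponentVec a l j n) (1 : R) = X 0 ^ a * X 1 ^ l * X 2 ^ j * X 3 ^ n := by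
  rw [monomial_one_eq, Finsupp.prod_fintype _ _ fun _ => pow_zero _, Fin.prod_univ_four]
  rfl

/-- The exponent vector recording the largest part, the number of parts, the number of distinct even
part values and the perimeter. -/
noncomputable def exponent (M : Multiset ℕ) : Fin 4 →₀ ℕ :=
  exponentVec M.sup (Multiset.card M) (numEvenValues M) (perim M)

lemma finite_preimage_exponent (e : Fin 4 →₀ ℕ) : (exponent ⁻¹' {e}).Finite := by
  refine (finite_setOf_card_eq_of_forall_mem (Finset.range (e 0 + 1)) (e 1)).subset fun M hM => ?_
  obtain ⟨sup_eq, card_eq, -⟩ := exponentVec_eq_iff.1 hM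
  exact ⟨card_eq, fun x hx => Finset.mem_range_succ_iff.2 (sup_eq ▸ Multiset.le_sup hx)⟩

lemma exponent_consMax (hM : M ≠ 0) (hk : k = 0 ∨ Odd (M.sup + k)) :
    exponent (consMax k M) = exponent M + exponentVec k 1 0 (k + 1) := by
  have card_pos : 0 < Multiset.card M := Multiset.card_pos.2 hM
  have card_eq : Multiset.card (consMax k M) = Multiset.card M + 1 := Multiset.card_cons _ _
  have no_new_even : ¬(Even (M.sup + k) ∧ M.sup + k ∉ M) := by
    rcases hk with rfl | hodd
    · exact fun h => h.2 (multiset_sup_mem hM)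
    · exact fun h => Nat.not_even_iff_odd.2 hodd h.1
  have numEvenValues_eq : numEvenValues (consMax k M) = numEvenValues M + 0 := by
    rw [consMax, numEvenValues_cons, if_neg no_new_even]
  have perim_eq : perim (consMax k M) = perim M + (k + 1) := by
    rw [perim, perim, sup_consMax, card_eq]
    omega
  rw [exponent, exponent, exponentVec_add, sup_consMax, card_eq, numEvenValues_eq, perim_eq]

lemma exponent_raiseMax (hM : M ≠ 0) (hodd : Odd M.sup) (hk : 0 < k) :
    exponent (raiseMax k M) = exponent M + exponentVec k 0 (if Odd k then 1 else 0) k := by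
  have card_pos : 0 < Multiset.card M := Multiset.card_pos.2 hM
  have card_eq : Multiset.card (raiseMax k M) = Multiset.card M + 0 := by
    rw [raiseMax, Multiset.card_cons, Multiset.card_erase_add_one (multiset_sup_mem hM), add_zero]
  have numEvenValues_erase : numEvenValues (M.erase M.sup) = numEvenValues M := by
    conv_rhs => rw [← sup_cons_erase_sup hM, numEvenValues_cons,
      if_neg fun h => Nat.not_even_iff_odd.2 hodd h.1, add_zero]
  have new_even_iff : Even (M.sup + k) ∧ M.sup + k ∉ M.erase M.sup ↔ Odd k := by
    have sup_add_notMem : M.sup + k ∉ M.erase M.sup := fun h =>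
      (Nat.lt_add_of_pos_right hk).not_ge (Multiset.le_sup (Multiset.mem_of_mem_erase h))
    rw [and_iff_left sup_add_notMem, Nat.even_add', iff_true_left hodd]
  have numEvenValues_eq :
      numEvenValues (raiseMax k M) = numEvenValues M + if Odd k then 1 else 0 := by
    simp only [raiseMax, numEvenValues_cons, numEvenValues_erase, new_even_iff]
  have perim_eq : perim (raiseMax k M) = perim M + k := by
    rw [perim, perim, sup_raiseMax, card_eq]
    omega
  rw [exponent, exponent, exponentVec_add, sup_raiseMax, card_eq, numEvenValues_eq, perim_eq]

end Statistics

section FunctionalEquations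

open MvPowerSeries

/-- The generating series, in the variables of `FOseries`, of the partitions whose largest part
satisfies `p`. -/
noncomputable def maxSeries (p : ℕ → Prop) : MvPowerSeries (Fin 4) ℤ :=
  generatingSeries ℤ exponent (partitionsWithMax p)

lemma generatingSeries_image_consMax {k : ℕ} {p : ℕ → Prop}
    (hk : ∀ a, p a → k = 0 ∨ Odd (a + k)) :
    generatingSeries ℤ exponent (consMax k '' partitionsWithMax p) =
      X 0 ^ k * X 1 * X 3 ^ (k + 1) * maxSeries p := by
  rw [generatingSeries_image (consMax_injective k).injOn
    fun M hM => exponent_consMax hM.1.1 (hk _ hM.2), monomial_exponentVec, pow_one, pow_zero,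
    mul_one, maxSeries]

lemma generatingSeries_image_raiseMax {k : ℕ} (hk : 0 < k) :
    generatingSeries ℤ exponent (raiseMax k '' partitionsWithMax Odd) =
      X 0 ^ k * X 2 ^ (if Odd k then 1 else 0) * X 3 ^ k * maxSeries Odd := by
  rw [generatingSeries_image ((raiseMax_injOn k).mono fun M hM => hM.1.1)
    fun M hM => exponent_raiseMax hM.1.1 hM.2 hk, monomial_exponentVec, pow_zero, mul_one,
    maxSeries]

lemma maxSeries_even_eq :
    maxSeries Even = X 1 * X 3 * maxSeries Even + X 0 * X 2 * X 3 * maxSeries Odd := by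
  have repeated_disjoint_raised :
      Disjoint (consMax 0 '' partitionsWithMax Even) (raiseMax 1 '' partitionsWithMax Odd) := by
    rw [Set.disjoint_left]
    intro M
    rw [mem_image_consMax_iff, mem_image_raiseMax_iff]
    omega
  conv_lhs => rw [maxSeries, partitionsWithMax_even_eq,
    generatingSeries_union finite_preimage_exponent repeated_disjoint_raised,
    generatingSeries_image_consMax fun _ _ => Or.inl rfl,
    generatingSeries_image_raiseMax Nat.one_pos, if_pos odd_one]
  ring

lemma maxSeries_odd_eq :
    maxSeries Odd = X 1 * X 3 * maxSeries Odd + X 0 * X 1 * X 3 +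
      X 0 * X 1 * X 3 ^ 2 * maxSeries Even + X 0 ^ 2 * X 3 ^ 2 * maxSeries Odd := by
  have one_more_disjoint_raised :
      Disjoint (consMax 1 '' partitionsWithMax Even) (raiseMax 2 '' partitionsWithMax Odd) := by
    rw [Set.disjoint_left]
    intro M
    rw [mem_image_consMax_iff, mem_image_raiseMax_iff]
    omega
  have singleton_disjoint_others : Disjoint {{1}}
      (consMax 1 '' partitionsWithMax Even ∪ raiseMax 2 '' partitionsWithMax Odd) := by
    rw [Set.disjoint_singleton_left, Set.mem_union, mem_image_consMax_iff, mem_image_raiseMax_iff]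
    simp [secondPart]
  have repeated_disjoint_others : Disjoint (consMax 0 '' partitionsWithMax Odd)
      ({{1}} ∪ (consMax 1 '' partitionsWithMax Even ∪ raiseMax 2 '' partitionsWithMax Odd)) := by
    rw [Set.disjoint_left]
    intro M
    rw [Set.mem_union, Set.mem_union, mem_image_consMax_iff, mem_image_consMax_iff,
      mem_image_raiseMax_iff, Set.mem_singleton_iff]
    rintro ⟨hM, second_eq_sup⟩
    rw [hM.eq_singleton_iff]
    omega
  have exponent_singleton_one : exponent {1} = exponentVec 1 1 0 1 := by
    simp [exponent, numEvenValues, perim, Finset.filter_singleton]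
  conv_lhs => rw [maxSeries, partitionsWithMax_odd_eq,
    generatingSeries_union finite_preimage_exponent repeated_disjoint_others,
    generatingSeries_union finite_preimage_exponent singleton_disjoint_others,
    generatingSeries_union finite_preimage_exponent one_more_disjoint_raised,
    generatingSeries_image_consMax fun _ _ => Or.inl rfl, generatingSeries_singleton,
    exponent_singleton_one, monomial_exponentVec,
    generatingSeries_image_consMax fun _ h => Or.inr h.add_one,
    generatingSeries_image_raiseMax Nat.two_pos, if_neg (Nat.not_odd_iff_even.2 even_two)]
  ring

lemma FOseries_eq_generatingSeries :
    FOseries = generatingSeries ℤ exponent {M | IsPartition M} := by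
  ext e
  change (if 1 ≤ e 0 ∧ 1 ≤ e 1 ∧ 1 ≤ e 3 then (FOt (e 2) (e 0) (e 1) (e 3) : ℤ) else 0) = _
  rw [coeff_generatingSeries]
  split_ifs with he
  · rw [FOt]
    congr 2
    ext M
    change _ ↔ IsPartition M ∧ exponent M = e
    rw [exponent, exponentVec_eq_iff, numEvenValues, Set.mem_ofPred_eq]
    tauto
  · have fiber_eq_empty : {M | IsPartition M} ∩ exponent ⁻¹' {e} = ∅ := by
      rw [Set.eq_empty_iff_forall_notMem]
      rintro M ⟨hM, hMe⟩
      have sup_pos : 0 < M.sup := IsPartition.sup_pos hM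
      have card_pos : 0 < Multiset.card M := Multiset.card_pos.2 hM.1
      have perim_pos : 0 < perim M := by rw [perim]; omega
      obtain ⟨sup_eq, card_eq, -, perim_eq⟩ := exponentVec_eq_iff.1 hMe
      exact he ⟨sup_eq ▸ sup_pos, card_eq ▸ card_pos, perim_eq ▸ perim_pos⟩
    rw [fiber_eq_empty, Set.ncard_empty, Nat.cast_zero]

lemma FOseries_eq_maxSeries_add : FOseries = maxSeries Even + maxSeries Odd := by
  have isPartition_eq_union :
      {M | IsPartition M} = partitionsWithMax Even ∪ partitionsWithMax Odd :=
    Set.ext fun M => (and_iff_left (Nat.even_or_odd M.sup)).symm.trans and_or_left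
  have even_disjoint_odd : Disjoint (partitionsWithMax Even) (partitionsWithMax Odd) :=
    Set.disjoint_left.2 fun _ heven hodd => Nat.not_even_iff_odd.2 hodd.2 heven.2
  rw [FOseries_eq_generatingSeries, isPartition_eq_union,
    generatingSeries_union finite_preimage_exponent even_disjoint_odd, maxSeries, maxSeries]

end FunctionalEquations

open MvPowerSeries in
theorem stmt_16 :
    ((1 : MvPowerSeries (Fin 4) ℤ) - 2 * X 1 * X 3
          + ((X 1) ^ 2 - (X 0) ^ 2) * (X 3) ^ 2 + (1 - X 2) * (X 0) ^ 2 * X 1 * (X 3) ^ 3) *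
        FOseries =
      X 0 * X 1 * X 3 * (1 - (X 1 - X 0 * X 2) * X 3) := by
  rw [FOseries_eq_maxSeries_add]
  linear_combination
    (1 - X 1 * X 3 - X 0 ^ 2 * X 3 ^ 2 + X 0 * X 1 * X 3 ^ 2) * maxSeries_even_eq +
      (1 - X 1 * X 3 + X 0 * X 2 * X 3) * maxSeries_odd_eq
end

section
/- For positive integers d, 1 ≤ a ≤ d+1, and b ∈ {1, d+1}, the following identity holds in the ring of formal power series ℤ[[q]]: (1 − q − q^{d+1})² · ∑_{n≥1} (∑_{m=1}^{n−1} f_d^{(a)}(n−m) f_d^{(b)}(m)) qⁿ = q^{a+b}. -/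
/-!
Let `F` be the generating function, by perimeter, of the partitions with parts in the progression
`a, a + k, a + 2k, …`. Such a partition either has a repeated largest part, or has a single largest
part that can be lowered by `k`, or consists of the one part `a`. Deleting one copy of the largest
part in the first case lowers the perimeter by `1`, and lowering the largest part in the second case
lowers it by `k`. Hence `F = q F + q ^ k F + q ^ a`, that is, `(1 - q - q ^ k) F = q ^ a`. The sum
in question is the product of two such series with `k = d + 1`.
-/

open Multiset Finset Filter

/-- `fP d a n`: partitions of perimeter n with every part ≡ a (mod d+1). -/
noncomputable def fP (d a n : ℕ) : ℕ :=
  rP n (fun M => ∀ x ∈ M, x % (d + 1) = a % (d + 1))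

section GeneratingFunctions

open PowerSeries

variable (R : Type*) [Semiring R] {α β : Type*}

/-- The generating function `∑ q ^ w x`, over `x ∈ S`, of a set `S` weighted by `w`. A weight that
is attained infinitely often contributes the coefficient `0`. -/
noncomputable def weightSeries (w : α → ℕ) (S : Set α) : R⟦X⟧ :=
  mk fun n => ({x ∈ S | w x = n}.ncard : R)

lemma weightSeries_singleton (w : α → ℕ) (x : α) : weightSeries R w {x} = X ^ w x := by
  ext n
  rw [weightSeries, coeff_mk, coeff_X_pow]
  split_ifs with h
  · have : {y ∈ ({x} : Set α) | w y = n} = {x} := by grind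
    rw [this, Set.ncard_singleton, Nat.cast_one]
  · have : {y ∈ ({x} : Set α) | w y = n} = ∅ := by grind
    rw [this, Set.ncard_empty, Nat.cast_zero]

lemma weightSeries_union {w : α → ℕ} {S T : Set α} (hST : Disjoint S T)
    (hfin : ∀ n, {x ∈ S ∪ T | w x = n}.Finite) :
    weightSeries R w (S ∪ T) = weightSeries R w S + weightSeries R w T := by
  ext n
  have hsep : {x ∈ S ∪ T | w x = n} = {x ∈ S | w x = n} ∪ {x ∈ T | w x = n} :=
    Set.union_inter_distrib_right S T {x | w x = n}
  have hdisj : Disjoint {x ∈ S | w x = n} {x ∈ T | w x = n} :=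
    hST.mono (Set.sep_subset _ _) (Set.sep_subset _ _)
  simp only [weightSeries, _root_.map_add, coeff_mk]
  have hfin' := hsep ▸ hfin n
  rw [hsep, Set.ncard_union_eq hdisj (hfin'.subset Set.subset_union_left)
    (hfin'.subset Set.subset_union_right), Nat.cast_add]

lemma weightSeries_image {w : α → ℕ} {v : β → ℕ} {S : Set α} {f : α → β} {j : ℕ}
    (hf : Set.InjOn f S) (hw : ∀ x ∈ S, v (f x) = w x + j) :
    weightSeries R v (f '' S) = X ^ j * weightSeries R w S := by
  ext n
  rw [coeff_X_pow_mul', weightSeries, weightSeries, coeff_mk, coeff_mk]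
  split_ifs with hj
  · have : {y ∈ f '' S | v y = n} = f '' {x ∈ S | w x = n - j} := by grind
    rw [this, (hf.mono (Set.sep_subset _ _)).ncard_image]
  · have : {y ∈ f '' S | v y = n} = ∅ := by grind
    rw [this, Set.ncard_empty, Nat.cast_zero]

variable {R} in
lemma mk_sum_Icc_mul {f g : ℕ → R} (hf : f 0 = 0) (hg : g 0 = 0) :
    mk (fun n => ∑ m ∈ Finset.Icc 1 (n - 1), f (n - m) * g m) = mk f * mk g := by
  ext n
  rw [coeff_mul, ← Finset.Nat.sum_antidiagonal_swap,
    Finset.Nat.sum_antidiagonal_eq_sum_range_succ_mk]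
  simp only [coeff_mk, Prod.fst_swap, Prod.snd_swap]
  refine Finset.sum_subset (fun m hm => ?_) fun m hm hm' => ?_
  · rw [Finset.mem_Icc] at hm
    rw [Finset.mem_range]
    omega
  · rw [Finset.mem_range] at hm
    rw [Finset.mem_Icc] at hm'
    obtain rfl | hnm : m = 0 ∨ n - m = 0 := by omega
    · rw [hg, mul_zero]
    · rw [hnm, hf, zero_mul]

end GeneratingFunctions

section Perimeter

lemma sup_mem_of_ne_zero {M : Multiset ℕ} (hM : M ≠ 0) : M.sup ∈ M := by
  obtain ⟨x, hx, hsup⟩ := M.toFinset.exists_mem_eq_sup (Multiset.toFinset_nonempty.2 hM) id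
  have : M.sup = x := by simpa [Finset.sup_def] using hsup
  rwa [this, ← Multiset.mem_toFinset]

lemma sup_cons_of_forall_le {s : ℕ} {T : Multiset ℕ} (h : ∀ x ∈ T, x ≤ s) :
    (s ::ₘ T).sup = s := by
  rw [Multiset.sup_cons, sup_eq_left]
  exact Multiset.sup_le.2 h

lemma perim_cons_of_forall_le {s : ℕ} {T : Multiset ℕ} (h : ∀ x ∈ T, x ≤ s) :
    perim (s ::ₘ T) = s + Multiset.card T := by
  rw [perim, sup_cons_of_forall_le h, Multiset.card_cons, ← add_assoc, Nat.add_sub_cancel]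

lemma IsPartition.perim_pos {M : Multiset ℕ} (hM : IsPartition M) : 0 < perim M := by
  have hsup : 0 < M.sup := hM.2 _ (sup_mem_of_ne_zero hM.1)
  have hcard : 0 < Multiset.card M := Multiset.card_pos.2 hM.1
  rw [perim]
  omega

lemma rP_zero (P : Multiset ℕ → Prop) : rP 0 P = 0 := by
  have : {M | IsPartition M ∧ perim M = 0 ∧ P M} = ∅ :=
    Set.eq_empty_of_forall_notMem fun _ ⟨hM, hperim, _⟩ => hM.perim_pos.ne' hperim
  rw [rP, this, Set.ncard_empty]

end Perimeter

section Progression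

/-- The arithmetic progression `a, a + k, a + 2k, …`. -/
def progression (a k : ℕ) : Set ℕ := {x | a ≤ x ∧ x ≡ a [MOD k]}

variable {a k x y : ℕ}

lemma self_mem_progression (a k : ℕ) : a ∈ progression a k := ⟨le_rfl, Nat.ModEq.refl a⟩

lemma add_mem_progression (hx : x ∈ progression a k) : x + k ∈ progression a k :=
  ⟨hx.1.trans (Nat.le_add_right x k), Nat.add_modEq_right.trans hx.2⟩

lemma add_le_of_lt_of_mem_progression (hx : x ∈ progression a k) (hy : y ∈ progression a k)
    (hxy : x < y) : x + k ≤ y :=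
  (hx.2.trans hy.2.symm).add_le_of_lt hxy

lemma exists_mem_progression_add_eq (hx : x ∈ progression a k) (hax : a < x) :
    ∃ y ∈ progression a k, y + k = x := by
  have hle : a + k ≤ x := add_le_of_lt_of_mem_progression (self_mem_progression a k) hx hax
  obtain ⟨y, rfl⟩ := Nat.exists_eq_add_of_le' (le_of_add_le_right hle)
  exact ⟨y, ⟨Nat.le_of_add_le_add_right hle, Nat.add_modEq_right.symm.trans hx.2⟩, rfl⟩

lemma mem_progression_iff_mod_eq (ha : a ≤ k) (hx : 0 < x) :
    x ∈ progression a k ↔ x % k = a % k := by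
  refine ⟨And.right, fun h => ⟨?_, h⟩⟩
  by_contra! hxa
  have : x + k ≤ a := Nat.ModEq.add_le_of_lt h hxa
  omega

end Progression

section SplitPartitions

/-- The partitions with parts in `A`, each encoded as the pair of its largest part and the multiset
of its remaining parts; adding a part and changing the largest part are injective on pairs. -/
def splitPartitions (A : Set ℕ) : Set (ℕ × Multiset ℕ) :=
  {p | p.1 ∈ A ∧ ∀ x ∈ p.2, x ∈ A ∧ x ≤ p.1}

/-- The perimeter of a partition encoded as in `splitPartitions`. -/
def splitPerim (p : ℕ × Multiset ℕ) : ℕ := p.1 + Multiset.card p.2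

/-- Adds a second copy of the largest part. -/
def repeatTop (p : ℕ × Multiset ℕ) : ℕ × Multiset ℕ := (p.1, p.1 ::ₘ p.2)

/-- Raises one copy of the largest part by `k`. -/
def raiseTop (k : ℕ) (p : ℕ × Multiset ℕ) : ℕ × Multiset ℕ := (p.1 + k, p.2)

variable (A : Set ℕ) {a k : ℕ}

lemma repeatTop_injective : Function.Injective repeatTop := by
  intro p q h
  obtain ⟨htop, hrest⟩ := Prod.mk.inj h
  rw [htop, Multiset.cons_inj_right] at hrest
  exact Prod.ext htop hrest

lemma raiseTop_injective (k : ℕ) : Function.Injective (raiseTop k) := by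
  intro p q h
  obtain ⟨htop, hrest⟩ := Prod.mk.inj h
  exact Prod.ext (Nat.add_right_cancel htop) hrest

lemma injOn_cons_splitPartitions : Set.InjOn (fun p => p.1 ::ₘ p.2) (splitPartitions A) := by
  intro p hp q hq (h : p.1 ::ₘ p.2 = q.1 ::ₘ q.2)
  have htop : p.1 = q.1 := by
    rw [← sup_cons_of_forall_le fun x hx => (hp.2 x hx).2, h,
      sup_cons_of_forall_le fun x hx => (hq.2 x hx).2]
  rw [htop, Multiset.cons_inj_right] at h
  exact Prod.ext htop h

variable {A} in
lemma image_cons_splitPartitions (hA : ∀ x ∈ A, 0 < x) :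
    (fun p => p.1 ::ₘ p.2) '' splitPartitions A = {M | IsPartition M ∧ ∀ x ∈ M, x ∈ A} := by
  ext M
  constructor
  · rintro ⟨⟨s, T⟩, ⟨hs, hT⟩, rfl⟩
    have hmem : ∀ x ∈ s ::ₘ T, x ∈ A :=
      Multiset.forall_mem_cons.2 ⟨hs, fun x hx => (hT x hx).1⟩
    exact ⟨⟨Multiset.cons_ne_zero, fun x hx => hA x (hmem x hx)⟩, hmem⟩
  · rintro ⟨⟨hM, -⟩, hmem⟩
    have hsup := sup_mem_of_ne_zero hM
    refine ⟨(M.sup, M.erase M.sup), ⟨hmem _ hsup, fun x hx => ?_⟩, Multiset.cons_erase hsup⟩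
    have hxM := Multiset.mem_of_mem_erase hx
    exact ⟨hmem x hxM, Multiset.le_sup hxM⟩

variable {A} in
lemma weightSeries_perim_eq_splitPerim (R : Type*) [Semiring R] (hA : ∀ x ∈ A, 0 < x) :
    weightSeries R perim {M | IsPartition M ∧ ∀ x ∈ M, x ∈ A} =
      weightSeries R splitPerim (splitPartitions A) := by
  rw [← image_cons_splitPartitions hA,
    weightSeries_image R (w := splitPerim) (j := 0) (injOn_cons_splitPartitions A)
      fun p hp => perim_cons_of_forall_le fun x hx => (hp.2 x hx).2,
    pow_zero, one_mul]

lemma finite_splitPartitions_splitPerim_eq (n : ℕ) :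
    {p ∈ splitPartitions A | splitPerim p = n}.Finite := by
  refine ((Set.finite_Iic n).prod (Set.finite_Iic (n • Multiset.range (n + 1)))).subset ?_
  rintro ⟨s, T⟩ ⟨⟨-, hT⟩, hn⟩
  change s + Multiset.card T = n at hn
  refine ⟨show s ≤ n by omega, Multiset.le_iff_count.2 fun x => ?_⟩
  by_cases hx : x ∈ T
  · have hxn : x ∈ Multiset.range (n + 1) := Multiset.mem_range.2 (by grind)
    rw [Multiset.count_nsmul, Multiset.count_eq_one_of_mem (Multiset.nodup_range _) hxn, mul_one]
    exact (Multiset.count_le_card x T).trans (by omega)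
  · rw [Multiset.count_eq_zero_of_notMem hx]
    exact Nat.zero_le _

lemma repeatTop_image_splitPartitions :
    repeatTop '' splitPartitions A = {p ∈ splitPartitions A | p.1 ∈ p.2} := by
  ext p
  constructor
  · rintro ⟨q, ⟨hs, hT⟩, rfl⟩
    exact ⟨⟨hs, Multiset.forall_mem_cons.2 ⟨⟨hs, le_rfl⟩, hT⟩⟩, Multiset.mem_cons_self _ _⟩
  · rintro ⟨⟨hs, hT⟩, hsT⟩
    refine ⟨(p.1, p.2.erase p.1), ⟨hs, fun x hx => hT x (Multiset.mem_of_mem_erase hx)⟩, ?_⟩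
    exact Prod.ext rfl (Multiset.cons_erase hsT)

lemma raiseTop_image_splitPartitions (hk : 0 < k) :
    raiseTop k '' splitPartitions (progression a k) =
      {p ∈ splitPartitions (progression a k) | p.1 ∉ p.2 ∧ p ≠ (a, 0)} := by
  ext ⟨s, T⟩
  constructor
  · rintro ⟨⟨r, T⟩, ⟨hr, hT⟩, ⟨rfl, rfl⟩⟩
    have hlt : r < r + k := Nat.lt_add_of_pos_right hk
    refine ⟨⟨add_mem_progression hr, fun x hx => ⟨(hT x hx).1, (hT x hx).2.trans hlt.le⟩⟩, ?_, ?_⟩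
    · exact fun hmem => hlt.not_ge (hT _ hmem).2
    · exact fun h => (hr.1.trans_lt hlt).ne' (congrArg Prod.fst h)
  · rintro ⟨⟨hs, hT⟩, hsT, hne⟩
    have hlt : ∀ x ∈ T, x < s := fun x hx => (hT x hx).2.lt_of_ne fun h => hsT (h ▸ hx)
    have has : a < s := by
      refine hs.1.lt_of_ne fun h => hne ?_
      have hT0 : T = 0 := Multiset.eq_zero_of_forall_notMem fun x hx =>
        (hlt x hx).not_ge (h.symm.trans_le (hT x hx).1.1)
      exact Prod.ext h.symm hT0
    obtain ⟨r, hr, rfl⟩ := exists_mem_progression_add_eq hs has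
    have hTr : ∀ x ∈ T, x ≤ r := fun x hx =>
      Nat.le_of_add_le_add_right (add_le_of_lt_of_mem_progression (hT x hx).1 hs (hlt x hx))
    exact ⟨(r, T), ⟨hr, fun x hx => ⟨(hT x hx).1, hTr x hx⟩⟩, rfl⟩

lemma splitPartitions_progression_eq (hk : 0 < k) :
    splitPartitions (progression a k) = repeatTop '' splitPartitions (progression a k) ∪
      (raiseTop k '' splitPartitions (progression a k) ∪ {(a, 0)}) := by
  have ha : (a, 0) ∈ splitPartitions (progression a k) :=
    ⟨self_mem_progression a k, fun x hx => absurd hx (Multiset.notMem_zero x)⟩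
  rw [repeatTop_image_splitPartitions, raiseTop_image_splitPartitions hk]
  ext p
  simp only [Set.mem_union, Set.mem_ofPred_eq, Set.mem_singleton_iff]
  grind

lemma disjoint_raiseTop_image_singleton (hk : 0 < k) :
    Disjoint (raiseTop k '' splitPartitions (progression a k)) {(a, 0)} := by
  rw [raiseTop_image_splitPartitions hk, Set.disjoint_singleton_right]
  exact fun h => h.2.2 rfl

lemma disjoint_repeatTop_image_raiseTop_image_union_singleton (hk : 0 < k) :
    Disjoint (repeatTop '' splitPartitions (progression a k))
      (raiseTop k '' splitPartitions (progression a k) ∪ {(a, 0)}) := by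
  rw [repeatTop_image_splitPartitions, raiseTop_image_splitPartitions hk, Set.disjoint_left]
  rintro p ⟨-, hp⟩ (⟨-, hp', -⟩ | rfl)
  · exact hp' hp
  · exact Multiset.notMem_zero a hp

end SplitPartitions

section Series

open PowerSeries

variable {a k d : ℕ}

lemma weightSeries_repeatTop_image (R : Type*) [Semiring R] (S : Set (ℕ × Multiset ℕ)) :
    weightSeries R splitPerim (repeatTop '' S) = X * weightSeries R splitPerim S := by
  rw [weightSeries_image R (j := 1) repeatTop_injective.injOn fun p _ => ?_, pow_one]
  rw [splitPerim, splitPerim, repeatTop, Multiset.card_cons, add_assoc]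

lemma weightSeries_raiseTop_image (R : Type*) [Semiring R] (k : ℕ) (S : Set (ℕ × Multiset ℕ)) :
    weightSeries R splitPerim (raiseTop k '' S) = X ^ k * weightSeries R splitPerim S :=
  weightSeries_image R (raiseTop_injective k).injOn fun p _ => Nat.add_right_comm p.1 k _

lemma weightSeries_splitPartitions_progression (R : Type*) [Semiring R] (hk : 0 < k) :
    weightSeries R splitPerim (splitPartitions (progression a k)) =
      X * weightSeries R splitPerim (splitPartitions (progression a k)) +
        (X ^ k * weightSeries R splitPerim (splitPartitions (progression a k)) + X ^ a) := by
  set S := splitPartitions (progression a k)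
  have hsplit : S = repeatTop '' S ∪ (raiseTop k '' S ∪ {(a, 0)}) :=
    splitPartitions_progression_eq hk
  have hfin (n : ℕ) : {p ∈ repeatTop '' S ∪ (raiseTop k '' S ∪ {(a, 0)}) |
      splitPerim p = n}.Finite :=
    hsplit ▸ finite_splitPartitions_splitPerim_eq (progression a k) n
  calc
    weightSeries R splitPerim S =
        weightSeries R splitPerim (repeatTop '' S ∪ (raiseTop k '' S ∪ {(a, 0)})) :=
      congrArg _ hsplit
    _ = weightSeries R splitPerim (repeatTop '' S) +
        (weightSeries R splitPerim (raiseTop k '' S) + weightSeries R splitPerim {(a, 0)}) := by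
      rw [weightSeries_union R (disjoint_repeatTop_image_raiseTop_image_union_singleton hk) hfin,
        weightSeries_union R (disjoint_raiseTop_image_singleton hk) fun n =>
          (hfin n).subset fun _ hp => ⟨Or.inr hp.1, hp.2⟩]
    _ = X * weightSeries R splitPerim S + (X ^ k * weightSeries R splitPerim S + X ^ a) := by
      rw [weightSeries_repeatTop_image, weightSeries_raiseTop_image, weightSeries_singleton]
      rfl

lemma one_sub_X_sub_X_pow_mul_weightSeries_perim (R : Type*) [Ring R] (ha : 0 < a) (hk : 0 < k) :
    (1 - X - X ^ k) * weightSeries R perim {M | IsPartition M ∧ ∀ x ∈ M, x ∈ progression a k} =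
      X ^ a := by
  rw [weightSeries_perim_eq_splitPerim R fun x hx => ha.trans_le hx.1, sub_mul, sub_mul, one_mul,
    sub_sub, sub_eq_iff_eq_add', add_assoc]
  exact weightSeries_splitPartitions_progression R hk

lemma mk_fP_eq_weightSeries_perim (R : Type*) [Semiring R] (ha : a ≤ d + 1) :
    mk (fun n => (fP d a n : R)) =
      weightSeries R perim {M | IsPartition M ∧ ∀ x ∈ M, x ∈ progression a (d + 1)} := by
  have hset (n : ℕ) :
      {M | IsPartition M ∧ perim M = n ∧ ∀ x ∈ M, x % (d + 1) = a % (d + 1)} =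
        {M ∈ {M | IsPartition M ∧ ∀ x ∈ M, x ∈ progression a (d + 1)} | perim M = n} := by
    ext M
    have hmem (hM : IsPartition M) : (∀ x ∈ M, x ∈ progression a (d + 1)) ↔
        ∀ x ∈ M, x % (d + 1) = a % (d + 1) :=
      forall₂_congr fun x hx => mem_progression_iff_mod_eq ha (hM.2 x hx)
    simp only [Set.mem_ofPred_eq]
    grind
  simp only [fP, rP, hset, weightSeries]

lemma one_sub_X_sub_X_pow_mul_mk_fP (R : Type*) [Ring R] (ha1 : 1 ≤ a) (ha2 : a ≤ d + 1) :
    (1 - X - X ^ (d + 1)) * PowerSeries.mk (fun n => (fP d a n : R)) = X ^ a := by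
  rw [mk_fP_eq_weightSeries_perim R ha2]
  exact one_sub_X_sub_X_pow_mul_weightSeries_perim R ha1 d.succ_pos

lemma fP_zero (d a : ℕ) : fP d a 0 = 0 := rP_zero _

lemma mk_sum_Icc_fP_mul_fP (R : Type*) [Semiring R] (d a b : ℕ) :
    mk (fun n => if n = 0 then 0 else
        ((∑ m ∈ Finset.Icc 1 (n - 1), fP d a (n - m) * fP d b m : ℕ) : R)) =
      mk (fun n => (fP d a n : R)) * mk fun n => (fP d b n : R) := by
  rw [← mk_sum_Icc_mul (by rw [fP_zero, Nat.cast_zero]) (by rw [fP_zero, Nat.cast_zero])]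
  congr 1 with n
  split_ifs with hn
  · rw [hn]
    rfl
  · push_cast
    rfl

end Series

theorem stmt_18_general (d a b : ℕ) (ha1 : 1 ≤ a) (ha2 : a ≤ d + 1)
    (hb1 : 1 ≤ b) (hb2 : b ≤ d + 1) :
    ((1 : PowerSeries ℤ) - PowerSeries.X - PowerSeries.X ^ (d + 1)) ^ 2 *
        PowerSeries.mk (fun n => if n = 0 then 0 else
          ((∑ m ∈ Finset.Icc 1 (n - 1), fP d a (n - m) * fP d b m : ℕ) : ℤ)) =
      PowerSeries.X ^ (a + b) := by
  rw [mk_sum_Icc_fP_mul_fP, pow_two, mul_mul_mul_comm, one_sub_X_sub_X_pow_mul_mk_fP ℤ ha1 ha2,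
    one_sub_X_sub_X_pow_mul_mk_fP ℤ hb1 hb2, pow_add]

theorem stmt_18 (d a b : ℕ) (hd : 1 ≤ d) (ha1 : 1 ≤ a) (ha2 : a ≤ d + 1)
    (hb : b = 1 ∨ b = d + 1) :
    ((1 : PowerSeries ℤ) - PowerSeries.X - PowerSeries.X ^ (d + 1)) ^ 2 *
        PowerSeries.mk (fun n => if n = 0 then 0 else
          ((∑ m ∈ Finset.Icc 1 (n - 1), fP d a (n - m) * fP d b m : ℕ) : ℤ)) =
      PowerSeries.X ^ (a + b) := by
  exact stmt_18_general d a b ha1 ha2 (by omega) (by omega)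
end
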